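/- Let d ≥ 2 and let S^b, S^a ∈ ℝ^d satisfy 0 < S^{b,i} ≤ S^{a,i} for i = 2,…,d and S^{b,1} = S^{a,1} = 1. Let K be the closed convex cone in ℝ^d generated by the vectors e_i − S^{b,i} e_1 (i=2,…,d), S^{a,j} e_1 − e_j (j=2,…,d), and e_1,…,e_d. Then the relative interior of the dual cone satisfies ri K* = {w ∈ ℝ^d : w_i > 0 for all i, and w_i/w_1 ∈ ri [S^{b,i}, S^{a,i}] for i = 2,…,d}; equivalently, ri K* = Ĥ(ri C), where C = [S^{b,2},S^{a,2}] × … × [S^{b,d},S^{a,d}] ⊆ ℝ^{d−1} and Ĥ(ri C) = {(w_1, ŵ) : w_1 > 0, ŵ ∈ w_1 · ri C}. -/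

import Mathlib

open Set Pointwise

/-- The smallest closed convex cone containing a set `S ⊆ ℝ^n`. -/
def generatedClosedCone {n : ℕ} (S : Set (Fin n → ℝ)) : Set (Fin n → ℝ) :=
  ⋂₀ {C | S ⊆ C ∧ IsClosed C ∧ Convex ℝ C ∧ ∀ x ∈ C, ∀ c : ℝ, 0 ≤ c → c • x ∈ C}

/-- The dual cone of `K ⊆ ℝ^n`. -/
def dualCone' {n : ℕ} (K : Set (Fin n → ℝ)) : Set (Fin n → ℝ) :=
  {w | ∀ x ∈ K, 0 ≤ ∑ i, x i * w i}

theorem ri_extend {E : Type*} [NormedAddCommGroup E] [NormedSpace ℝ E] {s : Set E} {x y : E}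
    (hx : x ∈ intrinsicInterior ℝ s) (hy : y ∈ s) : ∃ t : ℝ, 0 < t ∧ x + t • (x - y) ∈ s := by
  rw [mem_intrinsicInterior] at hx
  obtain ⟨z, hz, rfl⟩ := hx
  have hmem : ∀ t : ℝ, (z : E) + t • ((z : E) - y) ∈ affineSpan ℝ s := by
    intro t
    have h := AffineMap.lineMap_mem (-t) z.2 (subset_affineSpan ℝ s hy)
    rw [AffineMap.lineMap_apply] at h
    convert h using 1
    simp only [vsub_eq_sub, vadd_eq_add]
    module
  let f : ℝ → affineSpan ℝ s := fun t => ⟨(z : E) + t • ((z : E) - y), hmem t⟩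
  have hf : Continuous f := by
    apply Continuous.subtype_mk
    fun_prop
  have hf0 : f 0 = z := by
    apply Subtype.ext
    simp [f]
  have hev : ∀ᶠ t in nhds (0 : ℝ), f t ∈ ((↑) ⁻¹' s : Set (affineSpan ℝ s)) := by
    apply hf.continuousAt.eventually
    rw [hf0]
    exact mem_interior_iff_mem_nhds.1 hz
  obtain ⟨ε, hε, h⟩ := Metric.eventually_nhds_iff.1 hev
  refine ⟨ε / 2, by positivity, ?_⟩
  have : dist (ε / 2) 0 < ε := by
    rw [Real.dist_eq, sub_zero, abs_of_pos (by positivity)]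
    linarith
  exact h this

theorem ri_of_open {E : Type*} [NormedAddCommGroup E] [NormedSpace ℝ E] {s U : Set E} {x : E}
    (M : AffineSubspace ℝ E) (hM : s ⊆ M) (hU : IsOpen U) (hUM : ∀ y ∈ U, y ∈ M → y ∈ s)
    (hxs : x ∈ s) (hxU : x ∈ U) : x ∈ intrinsicInterior ℝ s := by
  rw [mem_intrinsicInterior]
  refine ⟨⟨x, subset_affineSpan ℝ s hxs⟩, ?_, rfl⟩
  rw [mem_interior]
  refine ⟨(Subtype.val : affineSpan ℝ s → E) ⁻¹' U, ?_, hU.preimage continuous_subtype_val, hxU⟩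
  intro y hy
  exact hUM _ hy (affineSpan_le.2 hM y.2)

theorem mem_ri_Icc {a b x : ℝ} (hab : a ≤ b) : x ∈ intrinsicInterior ℝ (Icc a b) ↔
    (a ≤ x ∧ x ≤ b) ∧ (a < b → a < x ∧ x < b) := by
  constructor
  · intro h
    have hx : x ∈ Icc a b := intrinsicInterior_subset h
    refine ⟨hx, fun hlt => ?_⟩
    obtain ⟨t, ht, h1⟩ := ri_extend h (left_mem_Icc.2 hab)
    obtain ⟨u, hu, h2⟩ := ri_extend h (right_mem_Icc.2 hab)
    simp only [smul_eq_mul, mem_Icc] at h1 h2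
    constructor
    · nlinarith [mul_pos hu (sub_pos.2 hlt)]
    · nlinarith [mul_pos ht (sub_pos.2 hlt)]
  · rintro ⟨h, h'⟩
    rcases hab.lt_or_eq with hlt | rfl
    · exact ri_of_open ⊤ (by simp) isOpen_Ioo (fun y hy _ => ⟨hy.1.le, hy.2.le⟩) h (h' hlt)
    · have : x = a := le_antisymm h.2 h.1
      simp [this]

theorem dual_generated {n : ℕ} (S : Set (Fin n → ℝ)) :
    dualCone' (generatedClosedCone S) = {w | ∀ x ∈ S, 0 ≤ ∑ i, x i * w i} := by
  ext w
  constructor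
  · intro h x hx
    exact h x (fun C hC => hC.1 hx)
  · intro h x hx
    refine hx {x | 0 ≤ ∑ i, x i * w i} ⟨h, ?_, ?_, ?_⟩
    · exact isClosed_le continuous_const (by fun_prop)
    · intro y hy z hz a b ha hb _
      have e : ∑ i, (a • y + b • z) i * w i = a * ∑ i, y i * w i + b * ∑ i, z i * w i := by
        simp only [Finset.mul_sum, ← Finset.sum_add_distrib]
        refine Finset.sum_congr rfl fun i _ => ?_
        simp only [Pi.add_apply, Pi.smul_apply, smul_eq_mul]
        ring
      simp only [mem_ofPred_eq] at hy hz ⊢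
      rw [e]
      positivity
    · intro y hy c hc
      have e : ∑ i, (c • y) i * w i = c * ∑ i, y i * w i := by
        simp only [Finset.mul_sum]
        refine Finset.sum_congr rfl fun i _ => ?_
        simp only [Pi.smul_apply, smul_eq_mul]
        ring
      simp only [mem_ofPred_eq] at hy ⊢
      rw [e]
      positivity

theorem ri_cone {d : ℕ} (b a : Fin d → ℝ) (hpos : ∀ i, 0 < b i) (hba : ∀ i, b i ≤ a i)
    (w : Fin (d + 1) → ℝ) :
    w ∈ intrinsicInterior ℝ {w : Fin (d + 1) → ℝ | 0 ≤ w 0 ∧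
      ∀ i : Fin d, b i * w 0 ≤ w i.succ ∧ w i.succ ≤ a i * w 0} ↔
    0 < w 0 ∧ ∀ i : Fin d, (b i * w 0 ≤ w i.succ ∧ w i.succ ≤ a i * w 0) ∧
      (b i < a i → b i * w 0 < w i.succ ∧ w i.succ < a i * w 0) := by
  constructor
  · intro h
    have hw := intrinsicInterior_subset h
    obtain ⟨t, ht, h1⟩ := ri_extend (y := Fin.cons 1 b) h
      (by simpa using hba)
    obtain ⟨u, hu, h2⟩ := ri_extend (y := Fin.cons 1 a) h
      (by simpa using hba)
    simp only [mem_ofPred_eq, Pi.add_apply, Pi.smul_apply, Pi.sub_apply, Fin.cons_zero,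
      Fin.cons_succ, smul_eq_mul] at h1 h2
    refine ⟨by nlinarith [h1.1], fun i => ⟨hw.2 i, fun hlt => ⟨?_, ?_⟩⟩⟩
    · have h3 := (h2.2 i).1
      have h4 := mul_pos hu (sub_pos.2 hlt)
      have h5 : 0 < (1 + u) * (w i.succ - b i * w 0) := by nlinarith
      linarith [(pos_iff_pos_of_mul_pos h5).1 (by linarith)]
    · have h3 := (h1.2 i).2
      have h4 := mul_pos ht (sub_pos.2 hlt)
      have h5 : 0 < (1 + t) * (a i * w 0 - w i.succ) := by nlinarith
      linarith [(pos_iff_pos_of_mul_pos h5).1 (by linarith)]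
  · rintro ⟨h0, h⟩
    let M : Submodule ℝ (Fin (d + 1) → ℝ) :=
      { carrier := {w | ∀ i : Fin d, b i = a i → w i.succ = b i * w 0}
        add_mem' := by
          intro x y hx hy i hi
          simp only [Pi.add_apply, hx i hi, hy i hi]
          ring
        zero_mem' := by
          intro i hi
          simp
        smul_mem' := by
          intro c x hx i hi
          simp only [Pi.smul_apply, hx i hi, smul_eq_mul]
          ring }
    refine ri_of_open (U := {w | 0 < w 0} ∩ ⋂ i : Fin d,
        {w | b i < a i → b i * w 0 < w i.succ ∧ w i.succ < a i * w 0})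
      M.toAffineSubspace ?_ ?_ ?_ ⟨h0.le, fun i => (h i).1⟩ ?_
    · intro x hx i hi
      have := hx.2 i
      rw [← hi] at this
      exact le_antisymm this.2 this.1
    · apply (isOpen_lt continuous_const (by fun_prop)).inter
      apply isOpen_iInter_of_finite
      intro i
      by_cases hi : b i < a i
      · simp only [hi, true_imp_iff]
        have o1 : IsOpen {w : Fin (d + 1) → ℝ | b i * w 0 < w i.succ} :=
          isOpen_lt (by fun_prop) (by fun_prop)
        have o2 : IsOpen {w : Fin (d + 1) → ℝ | w i.succ < a i * w 0} :=
          isOpen_lt (by fun_prop) (by fun_prop)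
        exact o1.inter o2
      · simp [hi]
    · rintro y ⟨hy0, hy⟩ hyM
      refine ⟨le_of_lt hy0, fun i => ?_⟩
      rcases (hba i).lt_or_eq with hi | hi
      · have := mem_iInter.1 hy i hi
        exact ⟨this.1.le, this.2.le⟩
      · have h1 : y i.succ = b i * y 0 := hyM i hi
        rw [← hi]
        exact ⟨h1.ge, h1.le⟩
    · exact ⟨h0, mem_iInter.2 fun i => (h i).2⟩

/-- In the market model with a bank account (asset `0`; the other `d` assets are
indexed by `i.succ`, `i : Fin d`, so there are `d + 1 ≥ 2` assets), with bid
prices `Sb` and ask prices `Sa` (`Sb 0 = Sa 0 = 1`, `0 < Sb ≤ Sa`), the relative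
interior of the dual of the solvency cone `K` is
`ri K* = {w : w > 0, w_i / w_0 ∈ ri [Sb^i, Sa^i]}`; equivalently
`ri K* = Ĥ(ri C)` where `ri C` is the product of the relative interiors of the
bid-ask intervals and `Ĥ(ri C) = {(w_0, ŵ) : w_0 > 0, ŵ ∈ w_0 • ri C}`. -/
theorem bank_account_relint_dual_solvency_cone {d : ℕ} (hd : 1 ≤ d)
    (Sb Sa : Fin (d + 1) → ℝ)
    (hb0 : Sb 0 = 1) (ha0 : Sa 0 = 1)
    (hpos : ∀ i : Fin d, 0 < Sb i.succ)
    (hba : ∀ i : Fin d, Sb i.succ ≤ Sa i.succ) :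
    let K : Set (Fin (d + 1) → ℝ) := generatedClosedCone
      ((Set.range fun i : Fin d =>
          (Pi.single i.succ 1 : Fin (d + 1) → ℝ) - Sb i.succ • (Pi.single 0 1 : Fin (d + 1) → ℝ)) ∪
        (Set.range fun j : Fin d =>
          Sa j.succ • (Pi.single 0 1 : Fin (d + 1) → ℝ) - Pi.single j.succ 1) ∪
        (Set.range fun i : Fin (d + 1) => (Pi.single i 1 : Fin (d + 1) → ℝ)))
    let riC : Set (Fin d → ℝ) :=
      {x | ∀ i, x i ∈ intrinsicInterior ℝ (Icc (Sb i.succ) (Sa i.succ))}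
    intrinsicInterior ℝ (dualCone' K) =
        {w | (∀ i, 0 < w i) ∧
          ∀ i : Fin d, w i.succ / w 0 ∈
            intrinsicInterior ℝ (Icc (Sb i.succ) (Sa i.succ))} ∧
      intrinsicInterior ℝ (dualCone' K) =
        {w | 0 < w 0 ∧ (fun i : Fin d => w i.succ) ∈ w 0 • riC} := by
  intro K riC
  have hD : dualCone' K = {w : Fin (d + 1) → ℝ | 0 ≤ w 0 ∧
      ∀ i : Fin d, Sb i.succ * w 0 ≤ w i.succ ∧ w i.succ ≤ Sa i.succ * w 0} := by
    simp only [K]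
    rw [dual_generated]
    ext w
    have e1 : ∀ i, ∑ k, (Pi.single i 1 : Fin (d + 1) → ℝ) k * w k = w i := by
      intro i
      simp [Pi.single_apply]
    have e2 : ∀ i : Fin d, ∑ k, ((Pi.single i.succ 1 : Fin (d + 1) → ℝ) -
        Sb i.succ • (Pi.single 0 1 : Fin (d + 1) → ℝ)) k * w k
        = w i.succ - Sb i.succ * w 0 := by
      intro i
      simp only [Pi.sub_apply, Pi.smul_apply, smul_eq_mul, sub_mul, Finset.sum_sub_distrib,
        mul_assoc, ← Finset.mul_sum, e1]
    have e3 : ∀ i : Fin d, ∑ k, (Sa i.succ • (Pi.single 0 1 : Fin (d + 1) → ℝ) -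
        (Pi.single i.succ 1 : Fin (d + 1) → ℝ)) k * w k
        = Sa i.succ * w 0 - w i.succ := by
      intro i
      simp only [Pi.sub_apply, Pi.smul_apply, smul_eq_mul, sub_mul, Finset.sum_sub_distrib,
        mul_assoc, ← Finset.mul_sum, e1]
    constructor
    · intro h
      refine ⟨?_, fun i => ⟨?_, ?_⟩⟩
      · have := h _ (Or.inr ⟨0, rfl⟩)
        rwa [e1] at this
      · have := h _ (Or.inl (Or.inl ⟨i, rfl⟩))
        rw [e2] at this
        linarith
      · have := h _ (Or.inl (Or.inr ⟨i, rfl⟩))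
        rw [e3] at this
        linarith
    · rintro ⟨h0, h⟩ x ((⟨i, rfl⟩ | ⟨i, rfl⟩) | ⟨i, rfl⟩)
      · rw [e2]
        linarith [(h i).1]
      · rw [e3]
        linarith [(h i).2]
      · rw [e1]
        refine Fin.cases h0 (fun j => ?_) i
        exact (mul_nonneg (hpos j).le h0).trans (h j).1
  have key : ∀ w : Fin (d + 1) → ℝ, w ∈ intrinsicInterior ℝ (dualCone' K) ↔
      0 < w 0 ∧ ∀ i : Fin d, w i.succ / w 0 ∈
        intrinsicInterior ℝ (Icc (Sb i.succ) (Sa i.succ)) := by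
    intro w
    rw [hD, ri_cone (fun i => Sb i.succ) (fun i => Sa i.succ) hpos hba]
    refine and_congr_right fun h0 => forall_congr' fun i => ?_
    rw [mem_ri_Icc (hba i), le_div_iff₀ h0, div_le_iff₀ h0, lt_div_iff₀ h0, div_lt_iff₀ h0]
  constructor
  · ext w
    rw [key]
    constructor
    · rintro ⟨h0, h⟩
      refine ⟨fun i => ?_, h⟩
      refine Fin.cases h0 (fun j => ?_) i
      have h1 := (intrinsicInterior_subset (h j)).1
      rw [le_div_iff₀ h0] at h1
      exact (mul_pos (hpos j) h0).trans_le h1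
    · rintro ⟨h0, h⟩
      exact ⟨h0 0, h⟩
  · ext w
    rw [key]
    refine and_congr_right fun h0 => ?_
    rw [mem_smul_set_iff_inv_smul_mem₀ h0.ne']
    simp only [riC, mem_ofPred_eq, Pi.smul_apply, smul_eq_mul, div_eq_inv_mul]
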